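/- **Setting.** Fix a set $\mathcal C$ of nominal constants and a set $\mathcal P$ of predicate constants with arities. Nominal terms $o$ are nominal constants and nominal variables. Formulae are built from predications $\varphi o_1\ldots o_n$, negative predications $-\varphi o_1\ldots o_n$ and $\bot$ by $\&,\vee,\supset,\forall,\exists$. For finite $Q\subseteq\mathcal P$, $o_1=^+_Q o_2$ abbreviates the conjunction over $\varphi\in Q$ of $\forall z_1\ldots\forall z_n\bigwedge_{j}\bigl(\varphi z_1\ldots o_1\ldots z_n\leftrightarrow\varphi z_1\ldots o_2\ldots z_n\bigr)$, with $o_1$, resp. $o_2$, at place $j$ ($1\le j\le n$); $o_1=^-_Q o_2$ is the same with $-\varphi$ for $\varphi$ (an empty conjunction is $\bot\supset\bot$). For predications $\varphi(x),\psi(x)$ containing $x$, $\psi(\iota_Qx\varphi(x))$ abbreviates $\exists x\varphi(x)\ \&\ \forall u\forall v((\varphi(u)\&\varphi(v))\supset u=^+_Qv)\ \&\ \forall w(\varphi(w)\supset\psi(w))$; the negative variant $\psi(\iota_Qx{-}\varphi(x))$ has $-\varphi$ and $=^-_Q$ instead, and in both $\psi$ may be replaced by $-\psi$. A subatomic base assigns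 to each $\tau\in\mathcal C\cup\mathcal P$ a set $\tau\Gamma$ of atomic sentences containing $\tau$. A *unit* is a formula or a term assumption $\tau\Gamma$; its *expression* is the formula itself, resp. the constant $\tau$. **Derivations** of the $\mathbf{I0}(\mathcal S^=_b)\iota$-system over the base are natural deduction trees with the following rules. Every unit may be assumed; formulae can be discharged, term assumptions are never discharged. - The intuitionistic I- and E-rules for $\&,\vee,\supset,\forall,\exists$ and $\bot i$ (from $\bot$ infer any formula); the minor premisses and the conclusion of $\vee E$ and $\exists E$ may be term assumptions; the eigenterm $o$ of $\forall I$ and $\exists E$ may be a variable or a nominal constant that occurs neither in the quantified formula, nor (for $\exists E$) in the conclusion, nor in any other open assumption, term assumptions $o\Gamma$ included. Moreover $\forall xA$ may be inferred from the premisses $A(x/\alpha)$ for all $\alpha\in\mathcal C$. - $as$I (resp. $-as$I): from $\varphi\Gamma,\alpha_1\Gamma,\ldots,\alpha_n\Gamma$ infer $\varphi\alpha_1\ldots\alpha_n$ (resp. $-\varphi\alpha_1\ldots\alpha_n$), provided $\varphi\alpha_1\ldots\alpha_n$ is (resp. is not) in $\varphi\Gamma\cap\alpha_1\Gamma\cap\ldots\cap\alpha_n\Gamma$;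 $as$E, $-as$E: from $\varphi\alpha_1\ldots\alpha_n$, resp. $-\varphi\alpha_1\ldots\alpha_n$, infer any one of $\varphi\Gamma,\alpha_1\Gamma,\ldots,\alpha_n\Gamma$. - $=^+_Q$: call atomic sentences $\varphi(\alpha),\varphi(\beta)$ mirror sentences if $\varphi(\alpha)$ contains $\alpha$ and $\varphi(\beta)$ results from it by exchanging $\alpha$ and $\beta$ everywhere. Introduction: infer $\alpha=^+_Q\beta$ from derivations of $\varphi(\beta)$ from $\varphi(\alpha)$ and of $\varphi(\alpha)$ from $\varphi(\beta)$, for all mirror sentences with $\varphi\in Q$, discharging these assumptions. Elimination: from the major premiss $\alpha=^+_Q\beta$ and one of two such mirror sentences infer the other. The rules for $=^-_Q$ are the same with $-\varphi$ for $\varphi$. - $\iota_Q$I: infer a qualified definiteness sentence (of any of the four forms) from its three conjuncts; $\iota_Q$E1–3: infer any one of the conjuncts from it. A derivation is *normal* if (1) no major premiss of an E-rule is the conclusion of an I-rule or of $\bot i$ (no maximal formula), (2) no major premiss of an E-rule is the conclusion of $\vee E$ or $\exists E$ (no permutative detour), and (3) every application of $\vee E$ or $\exists E$ discharges at least one assumption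 above each minor premiss (no simplifiable detour). Here the E-rules are all the elimination rules above, subatomic, identity and definiteness rules included. The *subexpression* relation is the least reflexive and transitive relation on expressions such that $A,B$ are subexpressions of $A\&B$, $A\vee B$, $A\supset B$; every instance $A(x/o)$ is one of $\forall xA$ and $\exists xA$; and the predicate constant and the nominal constants occurring in $\varphi o_1\ldots o_n$ or $-\varphi o_1\ldots o_n$ are subexpressions of it. A unit is said to be a subexpression when its expression is. **Theorem (Subexpression property).** Let $\mathcal D$ be a normal derivation of a unit $U$ from a set of units $\Gamma$ (i.e. all open assumptions of $\mathcal D$, including its term assumptions, are in $\Gamma$) in an $\mathbf{I0}(\mathcal S^=_b)\iota$-system. Then every unit occurring in $\mathcal D$ is a subexpression of the expression of some unit in $\Gamma\cup\{U\}$. -/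

import Mathlib

universe u

namespace QDef

/-! ### The language -/

/-- Nominal constants `𝒞`, predicate constants `𝒫`, and the arities of the latter. -/
structure Sig : Type (u + 1) where
  Const : Type u
  Pred : Type u
  arity : Pred → ℕ

variable {S : Sig.{u}}

/-- The non-logical constants `τ ∈ 𝒞 ∪ 𝒫`. -/
abbrev NonLog (S : Sig.{u}) : Type u := S.Const ⊕ S.Pred

/-- Nominal terms `o`: nominal constants and (free) nominal variables. -/
inductive Nom (S : Sig.{u}) : Type u where
  | const (c : S.Const)
  | var (x : ℕ)

/-- What may fill an argument place inside the scope of `n` quantifiers: a nominal term, or a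
variable bound by one of these quantifiers (de Bruijn index, `0` is the innermost).  Free variables
are named and bound ones are not, so formulae are taken up to renaming of bound variables and every
nominal term is free for every bound variable. -/
inductive Tm (S : Sig.{u}) (n : ℕ) : Type u where
  | free (o : Nom S)
  | bound (i : Fin n)

namespace Tm

/-- The term, moved inside the scope of `k` further quantifiers. -/
def shift {n : ℕ} (k : ℕ) : Tm S n → Tm S (n + k)
  | .free o => .free o
  | .bound i => .bound (i.addNat k)

/-- Replace the bound variables according to `σ`. -/
def subst {n m : ℕ} (σ : Fin n → Tm S m) : Tm S n → Tm S m
  | .free o => .free o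
  | .bound i => σ i

/-- A replacement of bound variables, moved inside the scope of one further quantifier. -/
def lift {n m : ℕ} (σ : Fin n → Tm S m) : Fin (n + 1) → Tm S (m + 1) :=
  Fin.cases (.bound 0) fun i => (σ i).shift 1

end Tm

/-- The two modes of predication: `φ o₁ … oₙ` (`pos`) and its failure `−φ o₁ … oₙ` (`neg`). -/
inductive Sign : Type where
  | pos
  | neg

/-- Formulae in the scope of `n` quantifiers. -/
inductive Fm (S : Sig.{u}) : ℕ → Type u where
  | pred {n : ℕ} (s : Sign) (p : S.Pred) (ts : Fin (S.arity p) → Tm S n) : Fm S n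
  | bot {n : ℕ} : Fm S n
  | and {n : ℕ} (A B : Fm S n) : Fm S n
  | or {n : ℕ} (A B : Fm S n) : Fm S n
  | imp {n : ℕ} (A B : Fm S n) : Fm S n
  | all {n : ℕ} (A : Fm S (n + 1)) : Fm S n
  | ex {n : ℕ} (A : Fm S (n + 1)) : Fm S n

/-- Formulae proper. -/
abbrev Form (S : Sig.{u}) : Type u := Fm S 0

namespace Fm

def subst : {n m : ℕ} → (Fin n → Tm S m) → Fm S n → Fm S m
  | _, _, σ, .pred s p ts => .pred s p fun i => (ts i).subst σ
  | _, _, _, .bot => .bot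
  | _, _, σ, .and A B => .and (A.subst σ) (B.subst σ)
  | _, _, σ, .or A B => .or (A.subst σ) (B.subst σ)
  | _, _, σ, .imp A B => .imp (A.subst σ) (B.subst σ)
  | _, _, σ, .all A => .all (A.subst (Tm.lift σ))
  | _, _, σ, .ex A => .ex (A.subst (Tm.lift σ))

/-- `A(x/o)`, where `x` is the variable bound by the quantifier that has been stripped off. -/
def inst (A : Fm S 1) (o : Nom S) : Form S := A.subst fun _ => .free o

/-- The nominal term `o` occurs (free) in the formula. -/
def Occ (o : Nom S) : {n : ℕ} → Fm S n → Prop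
  | _, .pred _ _ ts => ∃ i, ts i = .free o
  | _, .bot => False
  | _, .and A B => A.Occ o ∨ B.Occ o
  | _, .or A B => A.Occ o ∨ B.Occ o
  | _, .imp A B => A.Occ o ∨ B.Occ o
  | _, .all A => A.Occ o
  | _, .ex A => A.Occ o

/-- `A ↔ B`. -/
def iff {n : ℕ} (A B : Fm S n) : Fm S n := .and (.imp A B) (.imp B A)

/-- `A₁ & … & Aₘ`; the empty conjunction is `⊥ ⊃ ⊥`. -/
def conj {n : ℕ} : List (Fm S n) → Fm S n
  | [] => .imp .bot .bot
  | [A] => A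
  | A :: B :: L => .and A (conj (B :: L))

/-- `∀z₁ … ∀zₖ A`. -/
def alls {n : ℕ} : (k : ℕ) → Fm S (n + k) → Fm S n
  | 0, A => A
  | k + 1, A => alls k (.all A)

/-- `φ z₁ … z_{j-1} o z_{j+1} … zₖ` (or its negative form), in the scope of `∀z₁ … ∀zₖ`. -/
def place {n : ℕ} (s : Sign) (p : S.Pred) (o : Tm S n) (j : Fin (S.arity p)) :
    Fm S (n + S.arity p) :=
  .pred s p fun i =>
    if i = j then o.shift (S.arity p) else .bound (i.rev.castLE (Nat.le_add_left _ _))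

/-- `P_φ(o₁, o₂)` for `s = pos`, `N_φ(o₁, o₂)` for `s = neg`: the universally quantified conjunction
of the biconditionals `φ(… o₁ …) ↔ φ(… o₂ …)` (resp. with `−φ`) over all argument places of `φ`. -/
def respect {n : ℕ} (s : Sign) (p : S.Pred) (o₁ o₂ : Tm S n) : Fm S n :=
  alls (S.arity p) (conj ((List.finRange (S.arity p)).map fun j =>
    iff (place s p o₁ j) (place s p o₂ j)))

/-- Qualified identity: `o₁ =⁺_Q o₂` for `s = pos`, `o₁ =⁻_Q o₂` for `s = neg`. -/
noncomputable def eq {n : ℕ} (s : Sign) (Q : Finset S.Pred) (o₁ o₂ : Tm S n) : Fm S n :=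
  conj (Q.toList.map fun p => respect s p o₁ o₂)

end Fm

/-- `φ(x)`: a predicate constant applied to terms and to at least one occurrence of `x` (written
`none`). -/
structure OnePlace (S : Sig.{u}) (n : ℕ) : Type u where
  pred : S.Pred
  args : Fin (S.arity pred) → Option (Tm S n)
  occurs : ∃ i, args i = none

namespace OnePlace

/-- `φ(t)` for `s = pos`, `−φ(t)` for `s = neg`. -/
def ap {n : ℕ} (φ : OnePlace S n) (s : Sign) (t : Tm S n) : Fm S n :=
  .pred s φ.pred fun i => (φ.args i).getD t

def shift {n : ℕ} (φ : OnePlace S n) (k : ℕ) : OnePlace S (n + k) where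
  pred := φ.pred
  args i := (φ.args i).map (Tm.shift k)
  occurs := φ.occurs.imp fun i h => by simp [h]

end OnePlace

namespace Fm

/-- The existence clause `∃x φ(x)` (`s = pos`) or `∃x −φ(x)` (`s = neg`). -/
def exCl {n : ℕ} (s : Sign) (φ : OnePlace S n) : Fm S n :=
  .ex ((φ.shift 1).ap s (.bound 0))

/-- The qualified uniqueness clause `∀u∀v((φ(u) & φ(v)) ⊃ u =⁺_Q v)`; for `s = neg` with `−φ`
and `=⁻_Q`. -/
noncomputable def uniqCl {n : ℕ} (s : Sign) (Q : Finset S.Pred) (φ : OnePlace S n) : Fm S n :=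
  .all (.all (.imp (.and ((φ.shift 2).ap s (.bound 1)) ((φ.shift 2).ap s (.bound 0)))
    (eq s Q (.bound 1) (.bound 0))))

/-- The predication clause `∀w(φ(w) ⊃ ψ(w))`; `s` is the mode of `φ` and `r` that of `ψ`. -/
def predCl {n : ℕ} (s r : Sign) (φ ψ : OnePlace S n) : Fm S n :=
  .all (.imp ((φ.shift 1).ap s (.bound 0)) ((ψ.shift 1).ap r (.bound 0)))

/-- Qualified definiteness: `ψ(ι_Q x φ(x))`, with `−φ` and `=⁻_Q` if `s = neg`, and with `−ψ` if
`r = neg`. -/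
noncomputable def iota {n : ℕ} (s r : Sign) (Q : Finset S.Pred) (φ ψ : OnePlace S n) : Fm S n :=
  .and (exCl s φ) (.and (uniqCl s Q φ) (predCl s r φ ψ))

end Fm

/-! ### Subatomic bases and units -/

/-- Atomic sentences `φ α₁ … αₙ`. -/
structure Atm (S : Sig.{u}) : Type u where
  pred : S.Pred
  args : Fin (S.arity pred) → S.Const

namespace Atm

/-- The atomic sentence contains the non-logical constant. -/
def Has (A : Atm S) : NonLog S → Prop
  | .inl c => ∃ i, A.args i = c
  | .inr p => A.pred = p

/-- The atomic sentence (`pos`), or the corresponding negative predication (`neg`). -/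
def form (A : Atm S) (s : Sign) : Form S := .pred s A.pred fun i => .free (.const (A.args i))

end Atm

/-- A subatomic base: every non-logical constant `τ` is assigned a set `τΓ` of atomic sentences
containing `τ`. -/
structure Base (S : Sig.{u}) : Type u where
  val : NonLog S → Set (Atm S)
  sub : ∀ τ, ∀ A ∈ val τ, A.Has τ

/-- The side condition of `asI` (`pos`) and of `−asI` (`neg`): the atomic sentence `φ α₁ … αₙ` is,
resp. is not, in `φΓ ∩ α₁Γ ∩ … ∩ αₙΓ`. -/
def Base.Side (v : Base S) (A : Atm S) : Sign → Prop
  | .pos => ∀ τ, A.Has τ → A ∈ v.val τ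
  | .neg => ¬ ∀ τ, A.Has τ → A ∈ v.val τ

/-- Units: formulae and term assumptions `τΓ`.  A term assumption is recorded by its non-logical
constant `τ`, so that `ta τ` serves both as the unit `τΓ` and as the expression `τ`. -/
inductive Un (S : Sig.{u}) : Type u where
  | fm (A : Form S)
  | ta (τ : NonLog S)

/-- The nominal term `o` occurs in the unit; in a term assumption only if the latter is `oΓ`. -/
def Un.Occ (o : Nom S) : Un S → Prop
  | .fm A => A.Occ o
  | .ta (.inl c) => o = .const c
  | .ta (.inr _) => False

/-- The subexpression relation: a formula has as immediate subexpressions its immediate subformulae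
(for quantified formulae all the instances), and a predication `φ o₁ … oₙ` or `−φ o₁ … oₙ` has the
non-logical constants occurring in it. -/
inductive Subexpr : Un S → Un S → Prop where
  | refl (U : Un S) : Subexpr U U
  | andL {U : Un S} {A B : Form S} : Subexpr U (.fm A) → Subexpr U (.fm (.and A B))
  | andR {U : Un S} {A B : Form S} : Subexpr U (.fm B) → Subexpr U (.fm (.and A B))
  | orL {U : Un S} {A B : Form S} : Subexpr U (.fm A) → Subexpr U (.fm (.or A B))
  | orR {U : Un S} {A B : Form S} : Subexpr U (.fm B) → Subexpr U (.fm (.or A B))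
  | impL {U : Un S} {A B : Form S} : Subexpr U (.fm A) → Subexpr U (.fm (.imp A B))
  | impR {U : Un S} {A B : Form S} : Subexpr U (.fm B) → Subexpr U (.fm (.imp A B))
  | all {U : Un S} {A : Fm S 1} (o : Nom S) : Subexpr U (.fm (A.inst o)) → Subexpr U (.fm (.all A))
  | ex {U : Un S} {A : Fm S 1} (o : Nom S) : Subexpr U (.fm (A.inst o)) → Subexpr U (.fm (.ex A))
  | predConst (s : Sign) (p : S.Pred) (ts : Fin (S.arity p) → Tm S 0) :
      Subexpr (.ta (.inr p)) (.fm (.pred s p ts))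
  | nomConst (s : Sign) (p : S.Pred) (ts : Fin (S.arity p) → Tm S 0) (c : S.Const)
      (h : ∃ i, ts i = .free (.const c)) : Subexpr (.ta (.inl c)) (.fm (.pred s p ts))

/-! ### Derivations -/

/-- A pair of mirror atomic sentences `φ(a)`, `φ(b)` with `φ ∈ Q`: they are exactly alike, except
that `φ(a)` has `a` where `φ(b)` has `b`, and vice versa; and `φ(a)` does contain `a`. -/
structure Mirror (Q : Finset S.Pred) (a b : S.Const) : Type u where
  pred : S.Pred
  mem : pred ∈ Q
  left : Fin (S.arity pred) → S.Const
  right : Fin (S.arity pred) → S.Const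
  occurs : ∃ i, left i = a
  fst : ∀ i, left i = a → right i = b
  snd : ∀ i, left i = b → right i = a
  alike : ∀ i, left i ≠ a → left i ≠ b → right i = left i

namespace Mirror

variable {Q : Finset S.Pred} {a b : S.Const}

/-- `φ(a)`, resp. `−φ(a)`. -/
def lhs (m : Mirror Q a b) (s : Sign) : Form S := Atm.form ⟨m.pred, m.left⟩ s

/-- `φ(b)`, resp. `−φ(b)`. -/
def rhs (m : Mirror Q a b) (s : Sign) : Form S := Atm.form ⟨m.pred, m.right⟩ s

end Mirror

/-- `Deriv v H U` is the type of the derivations of the unit `U`, in the `I0(S⁼_b)ι`-system over the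
subatomic base `v`, whose set of open assumptions is `H`.  Assumptions carry labels: a rule that
discharges the formula `A` with label `l` closes all the assumptions of `A` with that label.  Term
assumptions are never discharged. -/
inductive Deriv (v : Base S) : Set (ℕ × Un S) → Un S → Type u where
  | hyp (l : ℕ) (U : Un S) : Deriv v {(l, U)} U
  -- Intuitionistic logic.
  | botE {H} (A : Form S) (D : Deriv v H (.fm .bot)) : Deriv v H (.fm A)
  | andI {H₁ H₂} {A B : Form S} (D₁ : Deriv v H₁ (.fm A)) (D₂ : Deriv v H₂ (.fm B)) :
      Deriv v (H₁ ∪ H₂) (.fm (.and A B))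
  | andE1 {H} {A B : Form S} (D : Deriv v H (.fm (.and A B))) : Deriv v H (.fm A)
  | andE2 {H} {A B : Form S} (D : Deriv v H (.fm (.and A B))) : Deriv v H (.fm B)
  | orI1 {H} {A : Form S} (B : Form S) (D : Deriv v H (.fm A)) : Deriv v H (.fm (.or A B))
  | orI2 {H} (A : Form S) {B : Form S} (D : Deriv v H (.fm B)) : Deriv v H (.fm (.or A B))
  -- In `∨E` and `∃E`, the unit `C` may be a term assumption.
  | orE {H₁ H₂ H₃} {A B : Form S} {C : Un S} (l : ℕ) (D₁ : Deriv v H₁ (.fm (.or A B)))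
      (D₂ : Deriv v H₂ C) (D₃ : Deriv v H₃ C) :
      Deriv v (H₁ ∪ (H₂ \ {(l, .fm A)}) ∪ (H₃ \ {(l, .fm B)})) C
  | impI {H} (A : Form S) {B : Form S} (l : ℕ) (D : Deriv v H (.fm B)) :
      Deriv v (H \ {(l, .fm A)}) (.fm (.imp A B))
  | impE {H₁ H₂} {A B : Form S} (D₁ : Deriv v H₁ (.fm (.imp A B))) (D₂ : Deriv v H₂ (.fm A)) :
      Deriv v (H₁ ∪ H₂) (.fm B)
  -- `∀I` with a variable or a nominal constant `o` as eigenterm.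
  | allI {H} (A : Fm S 1) (o : Nom S) (D : Deriv v H (.fm (A.inst o)))
      (h₁ : ∀ x ∈ H, ¬ x.2.Occ o) (h₂ : ¬ A.Occ o) : Deriv v H (.fm (.all A))
  -- `∀I` with a premiss for every nominal constant.
  | allIω {H : S.Const → Set (ℕ × Un S)} (A : Fm S 1)
      (D : ∀ c, Deriv v (H c) (.fm (A.inst (.const c)))) : Deriv v (⋃ c, H c) (.fm (.all A))
  | allE {H} {A : Fm S 1} (o : Nom S) (D : Deriv v H (.fm (.all A))) : Deriv v H (.fm (A.inst o))
  | exI {H} (A : Fm S 1) (o : Nom S) (D : Deriv v H (.fm (A.inst o))) : Deriv v H (.fm (.ex A))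
  | exE {H₁ H₂} {A : Fm S 1} {C : Un S} (l : ℕ) (o : Nom S) (D₁ : Deriv v H₁ (.fm (.ex A)))
      (D₂ : Deriv v H₂ C) (h₁ : ∀ x ∈ H₂ \ {(l, .fm (A.inst o))}, ¬ x.2.Occ o)
      (h₂ : ¬ A.Occ o) (h₃ : ¬ C.Occ o) :
      Deriv v (H₁ ∪ (H₂ \ {(l, .fm (A.inst o))})) C
  -- Subatomic rules: `asI`, `asE` for `s = pos`; `−asI`, `−asE` for `s = neg`.
  | asI {H : Set (ℕ × Un S)} (s : Sign) (A : Atm S) {H' : Fin (S.arity A.pred) → Set (ℕ × Un S)}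
      (D : Deriv v H (.ta (.inr A.pred))) (D' : ∀ i, Deriv v (H' i) (.ta (.inl (A.args i))))
      (h : v.Side A s) : Deriv v (H ∪ ⋃ i, H' i) (.fm (A.form s))
  | asE {H} (s : Sign) (A : Atm S) (τ : NonLog S) (h : A.Has τ) (D : Deriv v H (.fm (A.form s))) :
      Deriv v H (.ta τ)
  -- Qualified identity, `=⁺_Q` for `s = pos` and `=⁻_Q` for `s = neg`; in the introduction rule
  -- there are two premisses for every pair of mirror atomic sentences.
  | eqI (s : Sign) (Q : Finset S.Pred) (a b : S.Const) {H₁ H₂ : Mirror Q a b → Set (ℕ × Un S)}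
      (l : ℕ) (D₁ : ∀ m, Deriv v (H₁ m) (.fm (m.rhs s))) (D₂ : ∀ m, Deriv v (H₂ m) (.fm (m.lhs s))) :
      Deriv v ((⋃ m, H₁ m \ {(l, .fm (m.lhs s))}) ∪ ⋃ m, H₂ m \ {(l, .fm (m.rhs s))})
        (.fm (Fm.eq s Q (.free (.const a)) (.free (.const b))))
  | eqE1 {H₁ H₂} (s : Sign) (Q : Finset S.Pred) (a b : S.Const) (m : Mirror Q a b)
      (D₁ : Deriv v H₁ (.fm (Fm.eq s Q (.free (.const a)) (.free (.const b)))))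
      (D₂ : Deriv v H₂ (.fm (m.lhs s))) : Deriv v (H₁ ∪ H₂) (.fm (m.rhs s))
  | eqE2 {H₁ H₂} (s : Sign) (Q : Finset S.Pred) (a b : S.Const) (m : Mirror Q a b)
      (D₁ : Deriv v H₁ (.fm (Fm.eq s Q (.free (.const a)) (.free (.const b)))))
      (D₂ : Deriv v H₂ (.fm (m.rhs s))) : Deriv v (H₁ ∪ H₂) (.fm (m.lhs s))
  -- Qualified definiteness, positive for `s = pos` and negative for `s = neg`.
  | iotaI {H₁ H₂ H₃} (s r : Sign) (Q : Finset S.Pred) (φ ψ : OnePlace S 0)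
      (D₁ : Deriv v H₁ (.fm (Fm.exCl s φ))) (D₂ : Deriv v H₂ (.fm (Fm.uniqCl s Q φ)))
      (D₃ : Deriv v H₃ (.fm (Fm.predCl s r φ ψ))) :
      Deriv v (H₁ ∪ H₂ ∪ H₃) (.fm (Fm.iota s r Q φ ψ))
  | iotaE1 {H} (s r : Sign) (Q : Finset S.Pred) (φ ψ : OnePlace S 0)
      (D : Deriv v H (.fm (Fm.iota s r Q φ ψ))) : Deriv v H (.fm (Fm.exCl s φ))
  | iotaE2 {H} (s r : Sign) (Q : Finset S.Pred) (φ ψ : OnePlace S 0)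
      (D : Deriv v H (.fm (Fm.iota s r Q φ ψ))) : Deriv v H (.fm (Fm.uniqCl s Q φ))
  | iotaE3 {H} (s r : Sign) (Q : Finset S.Pred) (φ ψ : OnePlace S 0)
      (D : Deriv v H (.fm (Fm.iota s r Q φ ψ))) : Deriv v H (.fm (Fm.predCl s r φ ψ))

namespace Deriv

variable {v : Base S}

/-- The unit derived. -/
def concl {H : Set (ℕ × Un S)} {U : Un S} (_ : Deriv v H U) : Un S := U

/-- The units occurring in a derivation (as conclusions of its subderivations). -/
def units : {H : Set (ℕ × Un S)} → {U : Un S} → Deriv v H U → Set (Un S)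
  | _, _, d@(.hyp _ _) => {d.concl}
  | _, _, d@(.botE _ D) => {d.concl} ∪ D.units
  | _, _, d@(.andI D₁ D₂) => {d.concl} ∪ D₁.units ∪ D₂.units
  | _, _, d@(.andE1 D) => {d.concl} ∪ D.units
  | _, _, d@(.andE2 D) => {d.concl} ∪ D.units
  | _, _, d@(.orI1 _ D) => {d.concl} ∪ D.units
  | _, _, d@(.orI2 _ D) => {d.concl} ∪ D.units
  | _, _, d@(.orE _ D₁ D₂ D₃) => {d.concl} ∪ D₁.units ∪ D₂.units ∪ D₃.units
  | _, _, d@(.impI _ _ D) => {d.concl} ∪ D.units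
  | _, _, d@(.impE D₁ D₂) => {d.concl} ∪ D₁.units ∪ D₂.units
  | _, _, d@(.allI _ _ D _ _) => {d.concl} ∪ D.units
  | _, _, d@(.allIω _ D) => {d.concl} ∪ ⋃ c, (D c).units
  | _, _, d@(.allE _ D) => {d.concl} ∪ D.units
  | _, _, d@(.exI _ _ D) => {d.concl} ∪ D.units
  | _, _, d@(.exE _ _ D₁ D₂ _ _ _) => {d.concl} ∪ D₁.units ∪ D₂.units
  | _, _, d@(.asI _ _ D D' _) => {d.concl} ∪ D.units ∪ ⋃ i, (D' i).units
  | _, _, d@(.asE _ _ _ _ D) => {d.concl} ∪ D.units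
  | _, _, d@(.eqI _ _ _ _ _ D₁ D₂) => {d.concl} ∪ (⋃ m, (D₁ m).units) ∪ ⋃ m, (D₂ m).units
  | _, _, d@(.eqE1 _ _ _ _ _ D₁ D₂) => {d.concl} ∪ D₁.units ∪ D₂.units
  | _, _, d@(.eqE2 _ _ _ _ _ D₁ D₂) => {d.concl} ∪ D₁.units ∪ D₂.units
  | _, _, d@(.iotaI _ _ _ _ _ D₁ D₂ D₃) => {d.concl} ∪ D₁.units ∪ D₂.units ∪ D₃.units
  | _, _, d@(.iotaE1 _ _ _ _ _ D) => {d.concl} ∪ D.units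
  | _, _, d@(.iotaE2 _ _ _ _ _ D) => {d.concl} ∪ D.units
  | _, _, d@(.iotaE3 _ _ _ _ _ D) => {d.concl} ∪ D.units

/-- The last step is an application of an introduction rule. -/
def EndsInIntro : {H : Set (ℕ × Un S)} → {U : Un S} → Deriv v H U → Prop
  | _, _, .andI _ _ => True
  | _, _, .orI1 _ _ => True
  | _, _, .orI2 _ _ => True
  | _, _, .impI _ _ _ => True
  | _, _, .allI _ _ _ _ _ => True
  | _, _, .allIω _ _ => True
  | _, _, .exI _ _ _ => True
  | _, _, .asI _ _ _ _ _ => True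
  | _, _, .eqI _ _ _ _ _ _ _ => True
  | _, _, .iotaI _ _ _ _ _ _ _ _ => True
  | _, _, _ => False

/-- The last step is an application of `⊥i`. -/
def EndsInBot : {H : Set (ℕ × Un S)} → {U : Un S} → Deriv v H U → Prop
  | _, _, .botE _ _ => True
  | _, _, _ => False

/-- The last step is an application of `∨E` or of `∃E`. -/
def EndsInOrEx : {H : Set (ℕ × Un S)} → {U : Un S} → Deriv v H U → Prop
  | _, _, .orE _ _ _ _ => True
  | _, _, .exE _ _ _ _ _ _ _ => True
  | _, _, _ => False

/-- The condition on the derivation `D` of the major premiss of an elimination rule: that premiss is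
not a maximal formula, i.e. not the conclusion of an introduction rule or of `⊥i` (no detour), and
not the conclusion of `∨E` or `∃E` (no permutative detour).  The shape of the premiss makes an
introduction rule that concludes it one for the same formula; as qualified identity and qualified
definiteness sentences are abbreviations, this includes their rules next to those for the logical
constants. -/
def MajorOk {H : Set (ℕ × Un S)} {U : Un S} (D : Deriv v H U) : Prop :=
  ¬ D.EndsInIntro ∧ ¬ D.EndsInBot ∧ ¬ D.EndsInOrEx

/-- Normal derivations: every major premiss of an elimination rule meets the condition above, and
every application of `∨E` or `∃E` discharges an assumption above each of its minor premisses (no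
simplifiable detour). -/
def Normal : {H : Set (ℕ × Un S)} → {U : Un S} → Deriv v H U → Prop
  | _, _, .hyp _ _ => True
  | _, _, .botE _ D => D.Normal
  | _, _, .andI D₁ D₂ => D₁.Normal ∧ D₂.Normal
  | _, _, .andE1 D => D.MajorOk ∧ D.Normal
  | _, _, .andE2 D => D.MajorOk ∧ D.Normal
  | _, _, .orI1 _ D => D.Normal
  | _, _, .orI2 _ D => D.Normal
  | _, _, .orE (H₂ := H₂) (H₃ := H₃) (A := A) (B := B) l D₁ D₂ D₃ =>
      D₁.MajorOk ∧ ((l, .fm A) ∈ H₂ ∧ (l, .fm B) ∈ H₃) ∧ D₁.Normal ∧ D₂.Normal ∧ D₃.Normal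
  | _, _, .impI _ _ D => D.Normal
  | _, _, .impE D₁ D₂ => D₁.MajorOk ∧ D₁.Normal ∧ D₂.Normal
  | _, _, .allI _ _ D _ _ => D.Normal
  | _, _, .allIω _ D => ∀ c, (D c).Normal
  | _, _, .allE _ D => D.MajorOk ∧ D.Normal
  | _, _, .exI _ _ D => D.Normal
  | _, _, .exE (H₂ := H₂) (A := A) l o D₁ D₂ _ _ _ =>
      D₁.MajorOk ∧ (l, .fm (A.inst o)) ∈ H₂ ∧ D₁.Normal ∧ D₂.Normal
  | _, _, .asI _ _ D D' _ => D.Normal ∧ ∀ i, (D' i).Normal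
  | _, _, .asE _ _ _ _ D => D.MajorOk ∧ D.Normal
  | _, _, .eqI _ _ _ _ _ D₁ D₂ => (∀ m, (D₁ m).Normal) ∧ ∀ m, (D₂ m).Normal
  | _, _, .eqE1 _ _ _ _ _ D₁ D₂ => D₁.MajorOk ∧ D₁.Normal ∧ D₂.Normal
  | _, _, .eqE2 _ _ _ _ _ D₁ D₂ => D₁.MajorOk ∧ D₁.Normal ∧ D₂.Normal
  | _, _, .iotaI _ _ _ _ _ D₁ D₂ D₃ => D₁.Normal ∧ D₂.Normal ∧ D₃.Normal
  | _, _, .iotaE1 _ _ _ _ _ D => D.MajorOk ∧ D.Normal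
  | _, _, .iotaE2 _ _ _ _ _ D => D.MajorOk ∧ D.Normal
  | _, _, .iotaE3 _ _ _ _ _ D => D.MajorOk ∧ D.Normal

end Deriv

end QDef

/-!
Every inference has a principal unit, the major premiss of an elimination rule and the conclusion of
an introduction rule, such that every premiss is a subexpression of the principal unit or equal to
the conclusion, and every discharged assumption is a subexpression of the principal unit.

Going up from a major premiss of a normal derivation, one meets only elimination rules other than
`∨E` and `∃E`, each of which concludes a subexpression of its own major premiss; so the major
premiss is a subexpression of an open assumption at the top. This extends to the premiss `⊥` of
`⊥i`, which no introduction rule concludes: if it is concluded by `∨E` or `∃E`, then it is also the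
minor premiss, and the assumptions discharged there are subexpressions of a major premiss.

Hence passing to an immediate subderivation does not lead out of the set of subexpressions of the
open assumptions and of the conclusion.
-/

namespace QDef

variable {S : Sig.{u}}

/-! ### Substitution -/

section Substitution

variable {n m k : ℕ}

theorem Tm.subst_subst (σ : Fin n → Tm S m) (ρ : Fin m → Tm S k) (t : Tm S n) :
    (t.subst σ).subst ρ = t.subst fun i => (σ i).subst ρ := by
  cases t <;> rfl

theorem Tm.subst_bound (t : Tm S n) : t.subst Tm.bound = t := by
  cases t <;> rfl

theorem Tm.shift_subst_lift (σ : Fin n → Tm S m) (t : Tm S n) :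
    (t.shift 1).subst (Tm.lift σ) = (t.subst σ).shift 1 := by
  cases t <;> rfl

theorem Tm.lift_subst_lift (σ : Fin n → Tm S m) (ρ : Fin m → Tm S k) :
    (fun i => (Tm.lift σ i).subst (Tm.lift ρ)) = Tm.lift fun i => (σ i).subst ρ :=
  funext <| Fin.cases rfl fun i => Tm.shift_subst_lift ρ (σ i)

theorem Tm.lift_bound : Tm.lift (Tm.bound (S := S) (n := n)) = Tm.bound :=
  funext <| Fin.cases rfl fun _ => rfl

theorem Fm.subst_subst (A : Fm S n) (σ : Fin n → Tm S m) (ρ : Fin m → Tm S k) :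
    (A.subst σ).subst ρ = A.subst fun i => (σ i).subst ρ := by
  induction A generalizing m k with
  | pred s p ts => simp only [Fm.subst, Tm.subst_subst]
  | bot => rfl
  | and A B ihA ihB | or A B ihA ihB | imp A B ihA ihB => simp only [Fm.subst, ihA, ihB]
  | all A ih | ex A ih => simp only [Fm.subst, ih, Tm.lift_subst_lift]

theorem Fm.subst_bound (A : Fm S n) : A.subst Tm.bound = A := by
  induction A with
  | pred s p ts => simp only [Fm.subst, Tm.subst_bound]
  | bot => rfl
  | and A B ihA ihB | or A B ihA ihB | imp A B ihA ihB => simp only [Fm.subst, ihA, ihB]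
  | all A ih | ex A ih => simp only [Fm.subst, Tm.lift_bound, ih]

theorem Fm.subst_closed (A : Form S) (σ : Fin 0 → Tm S 0) : A.subst σ = A := by
  rw [Subsingleton.elim σ Tm.bound, Fm.subst_bound]

theorem Tm.exists_eq_free (t : Tm S 0) : ∃ o, t = .free o :=
  match t with
  | .free o => ⟨o, rfl⟩

theorem Fm.inst_subst_lift_succ (A : Fm S (n + 1)) (σ : Fin (n + 1) → Tm S 0) (o : Nom S)
    (ho : σ 0 = .free o) : (A.subst (Tm.lift fun i => σ i.succ)).inst o = A.subst σ := by
  rw [Fm.inst, Fm.subst_subst]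
  congr 1
  refine funext <| Fin.cases ho.symm fun i => ?_
  obtain ⟨o', ho'⟩ := (σ i.succ).exists_eq_free
  simp only [Tm.lift, Fin.cases_succ, ho', Tm.shift, Tm.subst]

theorem Fm.subst_conj (σ : Fin n → Tm S m) (L : List (Fm S n)) :
    (Fm.conj L).subst σ = Fm.conj (L.map (Fm.subst σ)) := by
  induction L with
  | nil => rfl
  | cons A L ih =>
    cases L with
    | nil => rfl
    | cons B L => exact congrArg (Fm.and (A.subst σ)) ih

/-- The replacement of `z₁, …, zₖ` by `f 0, …, f (k - 1)` in the scope of `∀z₁ … ∀zₖ`. Since `zₖ`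
has the de Bruijn index `0`, the order is reversed. -/
def Tm.closing (f : Fin k → Nom S) (i : Fin (0 + k)) : Tm S 0 :=
  .free (f (i.cast (Nat.zero_add k)).rev)

theorem Fm.place_subst_closing (s : Sign) (p : S.Pred) (f : Fin (S.arity p) → Nom S)
    (j : Fin (S.arity p)) :
    (Fm.place s p (.free (f j)) j).subst (Tm.closing f) = .pred s p fun i => .free (f i) := by
  simp only [Fm.place, Fm.subst]
  congr 1
  funext i
  split_ifs with hij
  · rw [hij]
    rfl
  · simp only [Tm.subst, Tm.closing]
    congr 2
    ext
    simp

end Substitution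

/-! ### The subexpression relation -/

theorem Subexpr.trans {U V W : Un S} (h : Subexpr U V) (h' : Subexpr V W) : Subexpr U W := by
  induction h' with
  | refl => exact h
  | andL _ ih => exact .andL (ih h)
  | andR _ ih => exact .andR (ih h)
  | orL _ ih => exact .orL (ih h)
  | orR _ ih => exact .orR (ih h)
  | impL _ ih => exact .impL (ih h)
  | impR _ ih => exact .impR (ih h)
  | all o _ ih => exact .all o (ih h)
  | ex o _ ih => exact .ex o (ih h)
  | predConst s p ts => cases h; exact .predConst s p ts
  | nomConst s p ts c hc => cases h; exact .nomConst s p ts c hc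

/-- Expressions are preordered by the subexpression relation. -/
instance : Preorder (Un S) where
  le := Subexpr
  le_refl := .refl
  le_trans _ _ _ := .trans

namespace Subexpr

theorem le_conj {A : Form S} {L : List (Form S)} (h : A ∈ L) : Un.fm A ≤ .fm (Fm.conj L) := by
  induction L with
  | nil => cases h
  | cons B L ih =>
    cases L with
    | nil => rw [List.mem_singleton.1 h]; rfl
    | cons C L =>
      rcases List.mem_cons.1 h with rfl | h
      · exact .andL (.refl _)
      · exact .andR (ih h)

theorem subst_le_alls {k : ℕ} (A : Fm S (0 + k)) (σ : Fin (0 + k) → Tm S 0) :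
    Un.fm (A.subst σ) ≤ .fm (Fm.alls k A) := by
  induction k with
  | zero => exact (congrArg Un.fm (Fm.subst_closed A σ)).le
  | succ k ih =>
    obtain ⟨o, ho⟩ := (σ 0).exists_eq_free
    calc Un.fm (A.subst σ)
        = .fm ((A.subst (Tm.lift fun i => σ i.succ)).inst o) := by
          rw [Fm.inst_subst_lift_succ A σ o ho]
      _ ≤ .fm ((Fm.all A).subst fun i => σ i.succ) := .all o (.refl _)
      _ ≤ .fm (Fm.alls (k + 1) A) := ih _ _

theorem iff_le_respect (s : Sign) (p : S.Pred) (o₁ o₂ : Tm S 0) (j : Fin (S.arity p))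
    (σ : Fin (0 + S.arity p) → Tm S 0) :
    Un.fm (.iff ((Fm.place s p o₁ j).subst σ) ((Fm.place s p o₂ j).subst σ)) ≤
      .fm (Fm.respect s p o₁ o₂) := by
  refine le_trans ?_ (subst_le_alls _ σ)
  rw [Fm.subst_conj, List.map_map]
  exact le_conj (List.mem_map_of_mem (List.mem_finRange j))

theorem pred_le_respect_left (s : Sign) (p : S.Pred) (f : Fin (S.arity p) → Nom S)
    (j : Fin (S.arity p)) (o : Tm S 0) :
    Un.fm (.pred s p fun i => .free (f i)) ≤ .fm (Fm.respect s p (.free (f j)) o) := by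
  rw [← Fm.place_subst_closing s p f j]
  exact le_trans (.andL (.impL (.refl _))) (iff_le_respect s p _ _ j _)

theorem pred_le_respect_right (s : Sign) (p : S.Pred) (f : Fin (S.arity p) → Nom S)
    (j : Fin (S.arity p)) (o : Tm S 0) :
    Un.fm (.pred s p fun i => .free (f i)) ≤ .fm (Fm.respect s p o (.free (f j))) := by
  rw [← Fm.place_subst_closing s p f j]
  exact le_trans (.andL (.impR (.refl _))) (iff_le_respect s p _ _ j _)

theorem respect_le_eq (s : Sign) {Q : Finset S.Pred} {p : S.Pred} (hp : p ∈ Q) (o₁ o₂ : Tm S 0) :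
    Un.fm (Fm.respect s p o₁ o₂) ≤ .fm (Fm.eq s Q o₁ o₂) :=
  le_conj (List.mem_map_of_mem (Finset.mem_toList.2 hp))

end Subexpr

section Mirror

variable {Q : Finset S.Pred} {a b : S.Const}

theorem Mirror.lhs_le_eq (m : Mirror Q a b) (s : Sign) :
    Un.fm (m.lhs s) ≤ .fm (Fm.eq s Q (.free (.const a)) (.free (.const b))) := by
  obtain ⟨j, hj⟩ := m.occurs
  have h := Subexpr.pred_le_respect_left s m.pred (fun i => .const (m.left i)) j (.free (.const b))
  rw [hj] at h
  exact h.trans (Subexpr.respect_le_eq s m.mem _ _)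

theorem Mirror.rhs_le_eq (m : Mirror Q a b) (s : Sign) :
    Un.fm (m.rhs s) ≤ .fm (Fm.eq s Q (.free (.const a)) (.free (.const b))) := by
  obtain ⟨j, hj⟩ := m.occurs
  have h := Subexpr.pred_le_respect_right s m.pred (fun i => .const (m.right i)) j
    (.free (.const a))
  rw [m.fst j hj] at h
  exact h.trans (Subexpr.respect_le_eq s m.mem _ _)

end Mirror

theorem Atm.Has.le_form {A : Atm S} {τ : NonLog S} (h : A.Has τ) (s : Sign) :
    Un.ta τ ≤ .fm (A.form s) :=
  match τ, h with
  | .inl c, ⟨i, hi⟩ => .nomConst _ _ _ c ⟨i, hi ▸ rfl⟩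
  | .inr _, rfl => .predConst _ _ _

namespace Fm

variable {n : ℕ}

theorem conj_ne_bot {L : List (Fm S n)} (h : ∀ A ∈ L, A ≠ .bot) : conj L ≠ .bot :=
  match L with
  | [] => nofun
  | [A] => h A (List.mem_singleton.2 rfl)
  | _ :: _ :: _ => nofun

theorem alls_ne_bot {k : ℕ} {A : Fm S (n + k)} (h : A ≠ .bot) : alls k A ≠ .bot := by
  induction k with
  | zero => exact h
  | succ k ih => exact ih nofun

theorem respect_ne_bot (s : Sign) (p : S.Pred) (o₁ o₂ : Tm S n) : respect s p o₁ o₂ ≠ .bot :=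
  alls_ne_bot <| conj_ne_bot <| List.forall_mem_map.2 fun _ _ => nofun

theorem eq_ne_bot (s : Sign) (Q : Finset S.Pred) (o₁ o₂ : Tm S n) : eq s Q o₁ o₂ ≠ .bot :=
  conj_ne_bot <| List.forall_mem_map.2 fun p _ => respect_ne_bot s p o₁ o₂

end Fm

/-! ### Premisses and principal units -/

/-- A derivation together with its open assumptions and its conclusion. -/
structure Derivation (v : Base S) : Type u where
  {hyps : Set (ℕ × Un S)}
  {concl : Un S}
  tree : Deriv v hyps concl

namespace Deriv

variable {v : Base S}

/-- The immediate subderivations, i.e. the derivations of the premisses of the last inference. -/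
noncomputable def premisses : {H : Set (ℕ × Un S)} → {U : Un S} → Deriv v H U → Set (Derivation v)
  | _, _, .hyp _ _ => ∅
  | _, _, .botE _ D => {⟨D⟩}
  | _, _, .andI D₁ D₂ => {⟨D₁⟩, ⟨D₂⟩}
  | _, _, .andE1 D => {⟨D⟩}
  | _, _, .andE2 D => {⟨D⟩}
  | _, _, .orI1 _ D => {⟨D⟩}
  | _, _, .orI2 _ D => {⟨D⟩}
  | _, _, .orE _ D₁ D₂ D₃ => {⟨D₁⟩, ⟨D₂⟩, ⟨D₃⟩}
  | _, _, .impI _ _ D => {⟨D⟩}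
  | _, _, .impE D₁ D₂ => {⟨D₁⟩, ⟨D₂⟩}
  | _, _, .allI _ _ D _ _ => {⟨D⟩}
  | _, _, .allIω _ D => Set.range fun c => ⟨D c⟩
  | _, _, .allE _ D => {⟨D⟩}
  | _, _, .exI _ _ D => {⟨D⟩}
  | _, _, .exE _ _ D₁ D₂ _ _ _ => {⟨D₁⟩, ⟨D₂⟩}
  | _, _, .asI _ _ D D' _ => insert ⟨D⟩ (Set.range fun i => ⟨D' i⟩)
  | _, _, .asE _ _ _ _ D => {⟨D⟩}
  | _, _, .eqI _ _ _ _ _ D₁ D₂ => (Set.range fun m => ⟨D₁ m⟩) ∪ Set.range fun m => ⟨D₂ m⟩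
  | _, _, .eqE1 _ _ _ _ _ D₁ D₂ => {⟨D₁⟩, ⟨D₂⟩}
  | _, _, .eqE2 _ _ _ _ _ D₁ D₂ => {⟨D₁⟩, ⟨D₂⟩}
  | _, _, .iotaI _ _ _ _ _ D₁ D₂ D₃ => {⟨D₁⟩, ⟨D₂⟩, ⟨D₃⟩}
  | _, _, .iotaE1 _ _ _ _ _ D => {⟨D⟩}
  | _, _, .iotaE2 _ _ _ _ _ D => {⟨D⟩}
  | _, _, .iotaE3 _ _ _ _ _ D => {⟨D⟩}

/-- The principal unit of the last inference: the major premiss of an elimination rule (with `⊥i`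
counted as the elimination rule of `⊥`), and otherwise the conclusion. -/
noncomputable def principal : {H : Set (ℕ × Un S)} → {U : Un S} → Deriv v H U → Un S
  | _, _, .botE _ D => D.concl
  | _, _, .andE1 D => D.concl
  | _, _, .andE2 D => D.concl
  | _, _, .orE _ D₁ _ _ => D₁.concl
  | _, _, .impE D₁ _ => D₁.concl
  | _, _, .allE _ D => D.concl
  | _, _, .exE _ _ D₁ _ _ _ _ => D₁.concl
  | _, _, .asE _ _ _ _ D => D.concl
  | _, _, .eqE1 _ _ _ _ _ D₁ _ => D₁.concl
  | _, _, .eqE2 _ _ _ _ _ D₁ _ => D₁.concl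
  | _, _, .iotaE1 _ _ _ _ _ D => D.concl
  | _, _, .iotaE2 _ _ _ _ _ D => D.concl
  | _, _, .iotaE3 _ _ _ _ _ D => D.concl
  | _, _, D => D.concl

variable {H : Set (ℕ × Un S)} {U : Un S}

theorem premiss_induction {P : ∀ {H : Set (ℕ × Un S)} {U : Un S}, Deriv v H U → Prop}
    (step : ∀ {H : Set (ℕ × Un S)} {U : Un S} (D : Deriv v H U),
      (∀ E ∈ D.premisses, P E.tree) → P D) (D : Deriv v H U) : P D := by
  induction D with
  | hyp => exact step _ fun _ hE => hE.elim
  | botE _ _ ih | andE1 _ ih | andE2 _ ih | orI1 _ _ ih | orI2 _ _ ih | impI _ _ _ ih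
  | allI _ _ _ _ _ ih | allE _ _ ih | exI _ _ _ ih | asE _ _ _ _ _ ih | iotaE1 _ _ _ _ _ _ ih
  | iotaE2 _ _ _ _ _ _ ih | iotaE3 _ _ _ _ _ _ ih =>
    refine step _ ?_
    rintro _ rfl
    exact ih
  | andI _ _ ih₁ ih₂ | impE _ _ ih₁ ih₂ | exE _ _ _ _ _ _ _ ih₁ ih₂ | eqE1 _ _ _ _ _ _ _ ih₁ ih₂
  | eqE2 _ _ _ _ _ _ _ ih₁ ih₂ =>
    refine step _ ?_
    rintro _ (rfl | rfl)
    exacts [ih₁, ih₂]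
  | orE _ _ _ _ ih₁ ih₂ ih₃ | iotaI _ _ _ _ _ _ _ _ ih₁ ih₂ ih₃ =>
    refine step _ ?_
    rintro _ (rfl | rfl | rfl)
    exacts [ih₁, ih₂, ih₃]
  | allIω _ _ ih =>
    refine step _ ?_
    rintro _ ⟨c, rfl⟩
    exact ih c
  | asI _ _ _ _ _ ih ih' =>
    refine step _ ?_
    rintro _ (rfl | ⟨i, rfl⟩)
    exacts [ih, ih' i]
  | eqI _ _ _ _ _ _ _ ih₁ ih₂ =>
    refine step _ ?_
    rintro _ (⟨m, rfl⟩ | ⟨m, rfl⟩)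
    exacts [ih₁ m, ih₂ m]

theorem units_eq (D : Deriv v H U) : D.units = {U} ∪ ⋃ E ∈ D.premisses, E.tree.units := by
  cases D <;>
    simp only [premisses, Set.biUnion_union, Set.biUnion_insert, Set.biUnion_singleton,
      Set.biUnion_range, Set.biUnion_empty, Set.union_empty, ← Set.union_assoc] <;>
    rfl

theorem Normal.of_mem_premisses {D : Deriv v H U} (hD : D.Normal) {E : Derivation v}
    (hE : E ∈ D.premisses) : E.tree.Normal := by
  cases D with
  | hyp => exact hE.elim
  | botE | orI1 | orI2 | impI | allI | exI => rcases hE with rfl; exact hD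
  | andE1 | andE2 | allE | asE | iotaE1 | iotaE2 | iotaE3 => rcases hE with rfl; exact hD.2
  | andI => rcases hE with rfl | rfl; exacts [hD.1, hD.2]
  | impE | eqE1 | eqE2 => rcases hE with rfl | rfl; exacts [hD.2.1, hD.2.2]
  | exE => rcases hE with rfl | rfl; exacts [hD.2.2.1, hD.2.2.2]
  | orE => rcases hE with rfl | rfl | rfl; exacts [hD.2.2.1, hD.2.2.2.1, hD.2.2.2.2]
  | iotaI => rcases hE with rfl | rfl | rfl; exacts [hD.1, hD.2.1, hD.2.2]
  | allIω => obtain ⟨c, rfl⟩ := hE; exact hD c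
  | asI => rcases hE with rfl | ⟨i, rfl⟩; exacts [hD.1, hD.2 i]
  | eqI => rcases hE with ⟨m, rfl⟩ | ⟨m, rfl⟩; exacts [hD.1 m, hD.2 m]

theorem premiss_le_principal_or_eq {D : Deriv v H U} {E : Derivation v} (hE : E ∈ D.premisses) :
    E.concl ≤ D.principal ∨ E.concl = U := by
  cases D with
  | hyp => exact hE.elim
  | botE | andE1 | andE2 | allE | asE | iotaE1 | iotaE2 | iotaE3 =>
    rcases hE with rfl; exact .inl le_rfl
  | impE => rcases hE with rfl | rfl; exacts [.inl le_rfl, .inl (.impL (.refl _))]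
  | orE => rcases hE with rfl | rfl | rfl; exacts [.inl le_rfl, .inr rfl, .inr rfl]
  | exE => rcases hE with rfl | rfl; exacts [.inl le_rfl, .inr rfl]
  | eqE1 _ _ _ _ m => rcases hE with rfl | rfl; exacts [.inl le_rfl, .inl (m.lhs_le_eq _)]
  | eqE2 _ _ _ _ m => rcases hE with rfl | rfl; exacts [.inl le_rfl, .inl (m.rhs_le_eq _)]
  | andI => rcases hE with rfl | rfl; exacts [.inl (.andL (.refl _)), .inl (.andR (.refl _))]
  | orI1 => rcases hE with rfl; exact .inl (.orL (.refl _))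
  | orI2 => rcases hE with rfl; exact .inl (.orR (.refl _))
  | impI => rcases hE with rfl; exact .inl (.impR (.refl _))
  | allI _ o => rcases hE with rfl; exact .inl (.all o (.refl _))
  | exI _ o => rcases hE with rfl; exact .inl (.ex o (.refl _))
  | allIω => obtain ⟨c, rfl⟩ := hE; exact .inl (.all (.const c) (.refl _))
  | asI s A =>
    have hA (τ : NonLog S) (hτ : A.Has τ) : Un.ta τ ≤ .fm (A.form s) := hτ.le_form s
    rcases hE with rfl | ⟨i, rfl⟩
    exacts [.inl (hA _ rfl), .inl (hA _ ⟨i, rfl⟩)]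
  | eqI s Q a b =>
    rcases hE with ⟨m, rfl⟩ | ⟨m, rfl⟩
    exacts [.inl (m.rhs_le_eq s), .inl (m.lhs_le_eq s)]
  | iotaI =>
    rcases hE with rfl | rfl | rfl
    exacts [.inl (.andL (.refl _)), .inl (.andR (.andL (.refl _))),
      .inl (.andR (.andR (.refl _)))]

theorem mem_hyps_or_le_principal {D : Deriv v H U} {E : Derivation v} (hE : E ∈ D.premisses)
    {x : ℕ × Un S} (hx : x ∈ E.hyps) : x ∈ H ∨ x.2 ≤ D.principal := by
  have discharge {K : Set (ℕ × Un S)} {y : ℕ × Un S} (hxK : x ∈ K) (hy : y.2 ≤ D.principal) :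
      x ∈ K \ {y} ∨ x.2 ≤ D.principal :=
    (eq_or_ne x y).symm.imp (fun hxy => ⟨hxK, hxy⟩) fun hxy => (congrArg _ hxy).le.trans hy
  cases D with
  | hyp => exact hE.elim
  | botE | andE1 | andE2 | allE | asE | iotaE1 | iotaE2 | iotaE3 | orI1 | orI2 | allI | exI =>
    rcases hE with rfl; exact .inl hx
  | impE | eqE1 | eqE2 | andI => rcases hE with rfl | rfl; exacts [.inl (.inl hx), .inl (.inr hx)]
  | impI => rcases hE with rfl; exact discharge hx (.impL (.refl _))
  | iotaI =>
    rcases hE with rfl | rfl | rfl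
    exacts [.inl (.inl (.inl hx)), .inl (.inl (.inr hx)), .inl (.inr hx)]
  | allIω => obtain ⟨c, rfl⟩ := hE; exact .inl (Set.mem_iUnion_of_mem c hx)
  | asI =>
    rcases hE with rfl | ⟨i, rfl⟩
    exacts [.inl (.inl hx), .inl (.inr (Set.mem_iUnion_of_mem i hx))]
  | orE l =>
    rcases hE with rfl | rfl | rfl
    · exact .inl (.inl (.inl hx))
    · exact (discharge hx (.orL (.refl _))).imp_left fun h => .inl (.inr h)
    · exact (discharge hx (.orR (.refl _))).imp_left .inr
  | exE l o =>
    rcases hE with rfl | rfl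
    · exact .inl (.inl hx)
    · exact (discharge hx (.ex o (.refl _))).imp_left .inr
  | eqI s =>
    rcases hE with ⟨m, rfl⟩ | ⟨m, rfl⟩
    · exact (discharge hx (m.lhs_le_eq s)).imp_left fun h => .inl (Set.mem_iUnion_of_mem m h)
    · exact (discharge hx (m.rhs_le_eq s)).imp_left fun h => .inr (Set.mem_iUnion_of_mem m h)

theorem EndsInIntro.ne_bot {D : Deriv v H U} (hD : D.EndsInIntro) : U ≠ .fm .bot := by
  rintro rfl
  generalize hA : Fm.bot = A at D
  cases D with
  | eqI => exact Fm.eq_ne_bot _ _ _ _ hA.symm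
  | _ => first | exact hD.elim | cases hA

theorem EndsInIntro.principal_eq {D : Deriv v H U} (hD : D.EndsInIntro) : D.principal = U := by
  cases D <;> first | rfl | exact hD.elim

theorem Normal.exists_major {D : Deriv v H U} (hD : D.Normal) (hI : ¬ D.EndsInIntro) :
    (∃ x ∈ H, x.2 = D.principal) ∨ ∃ E ∈ D.premisses, E.concl = D.principal ∧ E.hyps ⊆ H ∧
      (E.tree.MajorOk ∨ E.concl = .fm .bot) := by
  cases D with
  | hyp l U => exact .inl ⟨(l, U), rfl, rfl⟩
  | botE _ D => exact .inr ⟨⟨D⟩, rfl, rfl, subset_rfl, .inr rfl⟩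
  | andE1 D | andE2 D | allE _ D | asE _ _ _ _ D | iotaE1 _ _ _ _ _ D | iotaE2 _ _ _ _ _ D
  | iotaE3 _ _ _ _ _ D => exact .inr ⟨⟨D⟩, rfl, rfl, subset_rfl, .inl hD.1⟩
  | impE D | exE _ _ D | eqE1 _ _ _ _ _ D | eqE2 _ _ _ _ _ D =>
    exact .inr ⟨⟨D⟩, .inl rfl, rfl, Set.subset_union_left, .inl hD.1⟩
  | orE _ D =>
    exact .inr ⟨⟨D⟩, .inl rfl, rfl, Set.subset_union_left.trans Set.subset_union_left, .inl hD.1⟩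
  | _ => exact absurd trivial hI

theorem le_principal_or_endsInOrEx {D : Deriv v H U} (hD : ¬ D.EndsInBot ∨ U = .fm .bot) :
    U ≤ D.principal ∨ D.EndsInOrEx ∧ ∃ E ∈ D.premisses, E.concl = U := by
  cases D with
  | botE => exact .inl (hD.resolve_left (· trivial)).le
  | andE1 => exact .inl (.andL (.refl _))
  | andE2 => exact .inl (.andR (.refl _))
  | impE => exact .inl (.impR (.refl _))
  | allE o => exact .inl (.all o (.refl _))
  | asE s _ _ h => exact .inl (h.le_form s)
  | eqE1 s _ _ _ m => exact .inl (m.rhs_le_eq s)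
  | eqE2 s _ _ _ m => exact .inl (m.lhs_le_eq s)
  | iotaE1 => exact .inl (.andL (.refl _))
  | iotaE2 => exact .inl (.andR (.andL (.refl _)))
  | iotaE3 => exact .inl (.andR (.andR (.refl _)))
  | orE _ _ D => exact .inr ⟨trivial, ⟨D⟩, .inr (.inl rfl), rfl⟩
  | exE _ _ _ D => exact .inr ⟨trivial, ⟨D⟩, .inr rfl, rfl⟩
  | _ => exact .inl le_rfl

/-! ### Normal derivations -/

theorem hyps_mem_of_mem_premisses {D : Deriv v H U} {E : Derivation v} (hE : E ∈ D.premisses)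
    {T : LowerSet (Un S)} (hT : ∀ x ∈ H, x.2 ∈ T) (hP : D.principal ∈ T) :
    ∀ x ∈ E.hyps, x.2 ∈ T :=
  fun x hx => (mem_hyps_or_le_principal hE hx).elim (hT x) fun hxP => T.lower hxP hP

theorem Normal.mem_of_majorOk_or_eq_bot {D : Deriv v H U} (hD : D.Normal)
    (hU : D.MajorOk ∨ U = .fm .bot) {T : LowerSet (Un S)} (hT : ∀ x ∈ H, x.2 ∈ T) : U ∈ T := by
  induction D using premiss_induction with
  | @step H U D ih =>
    have hI : ¬ D.EndsInIntro := hU.elim And.left fun hbot hI => hI.ne_bot hbot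
    have hP : D.principal ∈ T := by
      rcases hD.exists_major hI with ⟨x, hx, hxP⟩ | ⟨E, hE, hEP, hEH, hEU⟩
      · exact hxP ▸ hT x hx
      · exact hEP ▸ ih E hE (hD.of_mem_premisses hE) hEU fun x hx => hT x (hEH hx)
    rcases le_principal_or_endsInOrEx (hU.imp_left fun h => h.2.1) with hUP | ⟨hOE, E, hE, rfl⟩
    · exact T.lower hUP hP
    · have hbot := hU.resolve_left fun h => h.2.2 hOE
      exact ih E hE (hD.of_mem_premisses hE) (.inr hbot) (hyps_mem_of_mem_premisses hE hT hP)

theorem Normal.principal_mem {D : Deriv v H U} (hD : D.Normal) {T : LowerSet (Un S)}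
    (hT : ∀ x ∈ H, x.2 ∈ T) (hU : U ∈ T) : D.principal ∈ T := by
  by_cases hI : D.EndsInIntro
  · rwa [hI.principal_eq]
  rcases hD.exists_major hI with ⟨x, hx, hxP⟩ | ⟨E, hE, hEP, hEH, hEU⟩
  · exact hxP ▸ hT x hx
  · exact hEP ▸ (hD.of_mem_premisses hE).mem_of_majorOk_or_eq_bot hEU fun x hx => hT x (hEH hx)

theorem Normal.units_subset {D : Deriv v H U} (hD : D.Normal) {T : LowerSet (Un S)}
    (hT : ∀ x ∈ H, x.2 ∈ T) (hU : U ∈ T) : D.units ⊆ T := by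
  induction D using premiss_induction with
  | step D ih =>
    have hP := hD.principal_mem hT hU
    rw [units_eq]
    refine Set.union_subset (Set.singleton_subset_iff.2 hU) (Set.iUnion₂_subset fun E hE => ?_)
    refine ih E hE (hD.of_mem_premisses hE) (hyps_mem_of_mem_premisses hE hT hP) ?_
    rcases premiss_le_principal_or_eq hE with hEP | rfl
    · exact T.lower hEP hP
    · exact hU

end Deriv

end QDef

theorem subexpression_property {S : QDef.Sig.{u}} (v : QDef.Base S) (Γ : Set (QDef.Un S))
    (U : QDef.Un S) {H : Set (ℕ × QDef.Un S)} (D : QDef.Deriv v H U)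
    (hΓ : ∀ x ∈ H, x.2 ∈ Γ) (hD : D.Normal) :
    ∀ W ∈ D.units, ∃ E ∈ Γ ∪ {U}, QDef.Subexpr W E := by
  intro W hW
  have hT : ∀ x ∈ H, x.2 ∈ lowerClosure (Γ ∪ {U}) :=
    fun x hx => subset_lowerClosure (.inl (hΓ x hx))
  have hU : U ∈ lowerClosure (Γ ∪ {U}) := subset_lowerClosure (.inr rfl)
  exact mem_lowerClosure.1 (hD.units_subset hT hU hW)
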